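/- Let d ≥ 1 and n ≥ 1, and let Z and U be real symmetric positive semidefinite (d+n)×(d+n) matrices satisfying the complementarity condition ZU = 0 (the zero matrix). Assume that the top-left d×d principal submatrix of Z is the d×d identity matrix I_d and that rank(U) = n. Then rank(Z) = d. -/

import Mathlib

/-- Let `Z` and `U` be real symmetric positive semidefinite
`(d+n)×(d+n)` matrices with `ZU = 0` (complementarity).  If the top-left `d×d`
principal submatrix of `Z` is the identity and `rank(U) = n`, then `rank(Z) = d`.
(The `(d+n)`-element index type is realized as `Fin d ⊕ Fin n`, so the top-left
`d×d` block is `Z.toBlocks₁₁`.) -/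
theorem rank_primal_eq_of_complementarity (d n : ℕ) (hd : 1 ≤ d) (hn : 1 ≤ n)
    (Z U : Matrix (Fin d ⊕ Fin n) (Fin d ⊕ Fin n) ℝ)
    (hZ : Z.PosSemidef) (hU : U.PosSemidef)
    (hcompl : Z * U = 0)
    (hblock : Z.toBlocks₁₁ = (1 : Matrix (Fin d) (Fin d) ℝ))
    (hrankU : U.rank = n) :
    Z.rank = d := by
  have h1 := Matrix.rank_add_rank_le_card_of_mul_eq_zero hcompl
  have h2 : (Z.submatrix Sum.inl Sum.inl).rank ≤ Z.rank := Matrix.rank_submatrix_le Z _ _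
  have h3 : Z.submatrix Sum.inl Sum.inl = (1 : Matrix (Fin d) (Fin d) ℝ) := hblock
  rw [h3, Matrix.rank_one, Fintype.card_fin] at h2
  rw [hrankU, Fintype.card_sum, Fintype.card_fin, Fintype.card_fin] at h1
  omega
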